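/- In the model plane M²_κ with κ arbitrary (and all points within distance π/(10√κ) of each other when κ > 0), consider a geodesic triangle p, q, x and the expansion of both angle relations: if a = |pq|, c = |px|, b = |qx| with |a − c| < b, then cos(∠̃_q(p,x)) + cos(∠̃_x(p,q)) = (1/2)[sin²(∠̃_q(p,x)) + sin²(∠̃_x(p,q))]·f_a(κ)·b + O(b²) as b → 0, where ∠̃ denotes the corresponding angle of the triangle in M²_κ and f_a(κ) = cs_κ(a)/sn_κ(a). -/

import Mathlib

open Real Set Filter

noncomputable def sn (κ t : ℝ) : ℝ :=
  if 0 < κ then Real.sin (Real.sqrt κ * t) / Real.sqrt κ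
  else if κ = 0 then t
  else Real.sinh (Real.sqrt (-κ) * t) / Real.sqrt (-κ)

noncomputable def cs (κ t : ℝ) : ℝ :=
  if 0 < κ then Real.cos (Real.sqrt κ * t)
  else if κ = 0 then 1
  else Real.cosh (Real.sqrt (-κ) * t)

noncomputable def md (κ t : ℝ) : ℝ :=
  if 0 < κ then (1 - Real.cos (Real.sqrt κ * t)) / κ
  else if κ = 0 then t ^ 2 / 2
  else (1 - Real.cosh (Real.sqrt (-κ) * t)) / κ

/-- `f c κ = cs_κ(c) / sn_κ(c)`. -/
noncomputable def fmod (c κ : ℝ) : ℝ := cs κ c / sn κ c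

/-- The model angle of a triangle in `M²_κ` at the vertex between sides of lengths
`x`, `y`, opposite the side of length `z`, via the κ-cosine law in `md` form. -/
noncomputable def mAngle (κ x y z : ℝ) : ℝ :=
  Real.arccos ((md κ x + md κ y - κ * md κ x * md κ y - md κ z) / (sn κ x * sn κ y))

/-!
Let `X`, `Y` be the cosines at `q` and `x`. Clearing denominators in the two cosine laws and adding
them gives the exact identity `sn a * X + sn c * Y = (md b / sn b) * (cs a + cs c)`. Since
`md b / sn b = b / 2 + O(b²)` and `a - c = b * X + O(b²)` (first variation), expanding `sn c` and
`cs c` around `a` turns it into `sn a * (X + Y) = cs a * b * (1 + X * Y) + O(b²)`. In particular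
`X + Y = O(b)`, so that `1 + X * Y` differs from `((1 - X²) + (1 - Y²)) / 2` by
`(X + Y)² / 2 = O(b²)`.
-/

open Asymptotics Topology

section Calculus

lemma isBigO_sub_sub_smul_deriv {E : Type*} [NormedAddCommGroup E] [NormedSpace ℝ E]
    {f f' : ℝ → E} {f'' : E} {a : ℝ} (hf : ∀ᶠ x in 𝓝 a, HasDerivAt f (f' x) x)
    (hf' : HasDerivAt f' f'' a) :
    (fun x => f x - f a - (x - a) • f' a) =O[𝓝 a] fun x => (x - a) ^ 2 := by
  obtain ⟨ε, hε, hball⟩ := Metric.eventually_nhds_iff_ball.1 hf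
  -- Removing the quadratic term makes the derivative `o(x - a)`, so that the little-o form of the
  -- mean value inequality applies.
  have hderiv : ∀ x ∈ Metric.ball a ε,
      HasDerivWithinAt (fun x => f x - (x - a) • f' a - ((x - a) ^ 2 / 2) • f'')
        (f' x - f' a - (x - a) • f'') (Metric.ball a ε) x := by
    intro x hx
    have hlin := (hasDerivAt_id x).sub_const a
    have h := ((hball x hx).sub (hlin.smul_const (f' a))).sub
      (((hlin.pow 2).div_const 2).smul_const f'')
    refine (h.congr_deriv ?_).hasDerivWithinAt
    simp
  have hremainder := (convex_ball a ε).isLittleO_pow_succ_real (n := 1)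
    (Metric.mem_ball_self hε) hderiv (by
      simpa [Metric.isOpen_ball.nhdsWithin_eq (Metric.mem_ball_self hε)] using hf'.isLittleO)
  rw [Metric.isOpen_ball.nhdsWithin_eq (Metric.mem_ball_self hε)] at hremainder
  have hquadratic : (fun x => ((x - a) ^ 2 / 2) • f'') =O[𝓝 a] fun x => (x - a) ^ 2 :=
    IsBigO.of_bound (‖f''‖ / 2) (Eventually.of_forall fun x => by
      rw [norm_smul, norm_div, Real.norm_ofNat]
      exact le_of_eq (by ring))
  refine (hremainder.isBigO.add hquadratic).congr_left fun x => ?_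
  simp only [sub_self, zero_smul, sub_zero, ne_eq, OfNat.ofNat_ne_zero, not_false_eq_true,
    zero_pow, zero_div]
  abel

lemma exists_ball_monotoneOn_or_antitoneOn {f f' : ℝ → ℝ} {a : ℝ}
    (hf : ∀ᶠ x in 𝓝 a, HasDerivAt f (f' x) x) (hf' : ContinuousAt f' a) (ha : f' a ≠ 0) :
    ∃ ε > 0, MonotoneOn f (Metric.ball a ε) ∨ AntitoneOn f (Metric.ball a ε) := by
  rcases ha.lt_or_gt with hneg | hpos
  · obtain ⟨ε, hε, h⟩ :=
      Metric.eventually_nhds_iff_ball.1 (hf.and (hf'.eventually (gt_mem_nhds hneg)))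
    refine ⟨ε, hε, Or.inr <| antitoneOn_of_hasDerivWithinAt_nonpos (convex_ball a ε)
      (fun x hx => (h x hx).1.continuousAt.continuousWithinAt) (f' := f') ?_ ?_⟩ <;>
      rw [Metric.isOpen_ball.interior_eq]
    exacts [fun x hx => (h x hx).1.hasDerivWithinAt, fun x hx => (h x hx).2.le]
  · obtain ⟨ε, hε, h⟩ :=
      Metric.eventually_nhds_iff_ball.1 (hf.and (hf'.eventually (lt_mem_nhds hpos)))
    refine ⟨ε, hε, Or.inl <| monotoneOn_of_hasDerivWithinAt_nonneg (convex_ball a ε)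
      (fun x hx => (h x hx).1.continuousAt.continuousWithinAt) (f' := f') ?_ ?_⟩ <;>
      rw [Metric.isOpen_ball.interior_eq]
    exacts [fun x hx => (h x hx).1.hasDerivWithinAt, fun x hx => (h x hx).2.le]

end Calculus

section ModelFunctions

lemma sn_sq_left {r : ℝ} (hr : 0 < r) (t : ℝ) : sn (r ^ 2) t = Real.sin (r * t) / r := by
  simp [sn, pow_pos hr 2, Real.sqrt_sq hr.le]

lemma cs_sq_left {r : ℝ} (hr : 0 < r) (t : ℝ) : cs (r ^ 2) t = Real.cos (r * t) := by
  simp [cs, pow_pos hr 2, Real.sqrt_sq hr.le]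

lemma md_sq_left {r : ℝ} (hr : 0 < r) (t : ℝ) :
    md (r ^ 2) t = (1 - Real.cos (r * t)) / r ^ 2 := by
  simp [md, pow_pos hr 2, Real.sqrt_sq hr.le]

lemma sn_zero_left (t : ℝ) : sn 0 t = t := by simp [sn]

lemma cs_zero_left (t : ℝ) : cs 0 t = 1 := by simp [cs]

lemma md_zero_left (t : ℝ) : md 0 t = t ^ 2 / 2 := by simp [md]

lemma sn_neg_sq_left {r : ℝ} (hr : 0 < r) (t : ℝ) :
    sn (-r ^ 2) t = Real.sinh (r * t) / r := by
  simp [sn, Real.sqrt_sq hr.le, hr.ne', (pow_pos hr 2).le]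

lemma cs_neg_sq_left {r : ℝ} (hr : 0 < r) (t : ℝ) : cs (-r ^ 2) t = Real.cosh (r * t) := by
  simp [cs, Real.sqrt_sq hr.le, hr.ne', (pow_pos hr 2).le]

lemma md_neg_sq_left {r : ℝ} (hr : 0 < r) (t : ℝ) :
    md (-r ^ 2) t = (1 - Real.cosh (r * t)) / (-r ^ 2) := by
  simp [md, Real.sqrt_sq hr.le, hr.ne', (pow_pos hr 2).le]

lemma eq_sq_or_eq_zero_or_eq_neg_sq (κ : ℝ) :
    (∃ r : ℝ, 0 < r ∧ κ = r ^ 2) ∨ κ = 0 ∨ ∃ r : ℝ, 0 < r ∧ κ = -r ^ 2 := by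
  rcases lt_trichotomy κ 0 with hneg | hzero | hpos
  · exact Or.inr (Or.inr ⟨√(-κ), Real.sqrt_pos.2 (neg_pos.2 hneg), by
      rw [Real.sq_sqrt (neg_pos.2 hneg).le, neg_neg]⟩)
  · exact Or.inr (Or.inl hzero)
  · exact Or.inl ⟨√κ, Real.sqrt_pos.2 hpos, (Real.sq_sqrt hpos.le).symm⟩

lemma hasDerivAt_sn (κ t : ℝ) : HasDerivAt (sn κ) (cs κ t) t := by
  rcases eq_sq_or_eq_zero_or_eq_neg_sq κ with ⟨r, hr, rfl⟩ | rfl | ⟨r, hr, rfl⟩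
  · rw [funext (sn_sq_left hr), cs_sq_left hr]
    exact (((hasDerivAt_const_mul r).sin).div_const r).congr_deriv (by field_simp)
  · rw [funext sn_zero_left, cs_zero_left]
    exact hasDerivAt_id t
  · rw [funext (sn_neg_sq_left hr), cs_neg_sq_left hr]
    exact (((hasDerivAt_const_mul r).sinh).div_const r).congr_deriv (by field_simp)

lemma hasDerivAt_md (κ t : ℝ) : HasDerivAt (md κ) (sn κ t) t := by
  rcases eq_sq_or_eq_zero_or_eq_neg_sq κ with ⟨r, hr, rfl⟩ | rfl | ⟨r, hr, rfl⟩
  · rw [funext (md_sq_left hr), sn_sq_left hr]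
    exact ((((hasDerivAt_const_mul r).cos).const_sub 1).div_const (r ^ 2)).congr_deriv
      (by field_simp)
  · rw [funext md_zero_left, sn_zero_left]
    exact ((hasDerivAt_pow 2 t).div_const 2).congr_deriv (by norm_num)
  · rw [funext (md_neg_sq_left hr), sn_neg_sq_left hr]
    exact ((((hasDerivAt_const_mul r).cosh).const_sub 1).div_const (-r ^ 2)).congr_deriv
      (by field_simp)

lemma cs_eq_one_sub_md (κ t : ℝ) : cs κ t = 1 - κ * md κ t := by
  rcases eq_sq_or_eq_zero_or_eq_neg_sq κ with ⟨r, hr, rfl⟩ | rfl | ⟨r, hr, rfl⟩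
  · rw [cs_sq_left hr, md_sq_left hr]; field_simp; ring
  · rw [cs_zero_left]; ring
  · rw [cs_neg_sq_left hr, md_neg_sq_left hr]; field_simp; ring

lemma hasDerivAt_cs (κ t : ℝ) : HasDerivAt (cs κ) (-(κ * sn κ t)) t := by
  rw [funext (cs_eq_one_sub_md κ)]
  exact ((hasDerivAt_md κ t).const_mul κ).const_sub 1

lemma sn_zero (κ : ℝ) : sn κ 0 = 0 := by simp [sn]

lemma md_zero (κ : ℝ) : md κ 0 = 0 := by simp [md]

lemma cs_zero (κ : ℝ) : cs κ 0 = 1 := by simp [cs_eq_one_sub_md, md_zero]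

lemma sn_neg (κ t : ℝ) : sn κ (-t) = -sn κ t := by
  unfold sn; split_ifs <;> simp [neg_div]

lemma md_neg (κ t : ℝ) : md κ (-t) = md κ t := by
  unfold md; split_ifs <;> simp

lemma md_add (κ x y : ℝ) :
    md κ (x + y) = md κ x + md κ y - κ * md κ x * md κ y + sn κ x * sn κ y := by
  rcases eq_sq_or_eq_zero_or_eq_neg_sq κ with ⟨r, hr, rfl⟩ | rfl | ⟨r, hr, rfl⟩
  · simp only [md_sq_left hr, sn_sq_left hr, mul_add, Real.cos_add]; field_simp; ring
  · simp only [md_zero_left, sn_zero_left]; ring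
  · simp only [md_neg_sq_left hr, sn_neg_sq_left hr, mul_add, Real.cosh_add]; field_simp; ring

lemma md_sub (κ x y : ℝ) :
    md κ (x - y) = md κ x + md κ y - κ * md κ x * md κ y - sn κ x * sn κ y := by
  rw [sub_eq_add_neg, md_add, md_neg, sn_neg]; ring

lemma sn_pos {κ t : ℝ} (ht : 0 < t) (h : 0 < κ → t < π / √κ) : 0 < sn κ t := by
  rcases eq_sq_or_eq_zero_or_eq_neg_sq κ with ⟨r, hr, rfl⟩ | rfl | ⟨r, hr, rfl⟩
  · have hrt : r * t < π := by
      have := h (by positivity)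
      rwa [Real.sqrt_sq hr.le, lt_div_iff₀' hr] at this
    rw [sn_sq_left hr]
    exact div_pos (Real.sin_pos_of_pos_of_lt_pi (by positivity) hrt) hr
  · rwa [sn_zero_left]
  · rw [sn_neg_sq_left hr]
    exact div_pos (Real.sinh_pos_iff.2 (by positivity)) hr

lemma isEquivalent_sn_zero (κ : ℝ) : sn κ ~[𝓝 0] id := by
  simpa [IsEquivalent, sn_zero, cs_zero] using! (hasDerivAt_sn κ 0).isLittleO

lemma eventually_sn_eq_zero_imp (κ : ℝ) : ∀ᶠ t in 𝓝 0, sn κ t = 0 → t = 0 :=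
  (isEquivalent_sn_zero κ).isBigO_symm.eq_zero_imp

lemma isLittleO_sn_sub_mul_cs (κ : ℝ) :
    (fun t => sn κ t - t * cs κ t) =o[𝓝 0] fun t => t ^ 2 := by
  have hderiv (t : ℝ) : HasDerivAt (fun t => sn κ t - t * cs κ t) (κ * t * sn κ t) t :=
    ((hasDerivAt_sn κ t).sub ((hasDerivAt_id t).mul (hasDerivAt_cs κ t))).congr_deriv
      (by simp only [id]; ring)
  have hsn : sn κ =o[𝓝 0] fun _ => (1 : ℝ) := by
    simpa [isLittleO_one_iff, sn_zero] using (hasDerivAt_sn κ 0).continuousAt.tendsto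
  have hsmall : (fun t => κ * t * sn κ t) =o[𝓝 0] fun t : ℝ => t := by
    simpa using (isBigO_const_mul_self κ (fun t : ℝ => t) (𝓝 0)).mul_isLittleO hsn
  simpa [sn_zero] using convex_univ.isLittleO_pow_succ_real (n := 1) (mem_univ (0 : ℝ))
    (fun t _ => (hderiv t).hasDerivWithinAt) (by simpa using hsmall)

lemma isLittleO_md_sub_half_mul_sn (κ : ℝ) :
    (fun t => md κ t - t / 2 * sn κ t) =o[𝓝 0] fun t => t ^ 3 := by
  have hderiv (t : ℝ) :
      HasDerivAt (fun t => md κ t - t / 2 * sn κ t) (1 / 2 * (sn κ t - t * cs κ t)) t :=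
    ((hasDerivAt_md κ t).sub
      (((hasDerivAt_id t).div_const 2).mul (hasDerivAt_sn κ t))).congr_deriv
      (by simp only [id]; ring)
  simpa [md_zero] using convex_univ.isLittleO_pow_succ_real (n := 2) (mem_univ (0 : ℝ))
    (fun t _ => (hderiv t).hasDerivWithinAt)
    (by simpa using (isLittleO_sn_sub_mul_cs κ).const_mul_left (1 / 2))

lemma isBigO_md_div_sn_sub_half (κ : ℝ) :
    (fun t => md κ t / sn κ t - t / 2) =O[𝓝 0] fun t => t ^ 2 := by
  refine ((isLittleO_md_sub_half_mul_sn κ).isBigO.mul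
    (isEquivalent_sn_zero κ).inv.isBigO).congr' ?_ (Eventually.of_forall fun t => ?_)
  · filter_upwards [eventually_sn_eq_zero_imp κ] with t ht
    rcases eq_or_ne (sn κ t) 0 with h | h
    · simp [ht h, md_zero]
    · simp only [Pi.inv_apply]
      field_simp
  · rcases eq_or_ne t 0 with rfl | h
    · simp
    · simp only [Pi.inv_apply, id]
      field_simp

lemma isBigO_md_zero (κ : ℝ) : md κ =O[𝓝 0] fun t => t ^ 2 := by
  simpa [md_zero, sn_zero] using
    isBigO_sub_sub_smul_deriv (.of_forall (hasDerivAt_md κ)) (hasDerivAt_sn κ 0)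

lemma isBigO_sn_sub_self (κ : ℝ) : (fun t => sn κ t - t) =O[𝓝 0] fun t => t ^ 2 := by
  simpa [sn_zero, cs_zero] using
    isBigO_sub_sub_smul_deriv (.of_forall (hasDerivAt_sn κ)) (hasDerivAt_cs κ 0)

end ModelFunctions

section CosineLaw

variable {κ x y z : ℝ}

/-- The cosine that the `κ`-cosine law assigns to the angle between sides `x` and `y` opposite to
`z`. It is the argument of `arccos` in `mAngle`, which truncates it to `[-1, 1]`. -/
noncomputable def cosLaw (κ x y z : ℝ) : ℝ :=
  (md κ x + md κ y - κ * md κ x * md κ y - md κ z) / (sn κ x * sn κ y)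

lemma cos_mAngle (h : |cosLaw κ x y z| ≤ 1) : Real.cos (mAngle κ x y z) = cosLaw κ x y z :=
  Real.cos_arccos (neg_le_of_abs_le h) (le_of_abs_le h)

lemma abs_cosLaw_le_one
    (hmd : MonotoneOn (md κ) (Icc (x - y) (x + y)) ∨ AntitoneOn (md κ) (Icc (x - y) (x + y)))
    (hz : z ∈ Icc (x - y) (x + y)) : |cosLaw κ x y z| ≤ 1 := by
  have hleft : x - y ∈ Icc (x - y) (x + y) := left_mem_Icc.2 (hz.1.trans hz.2)
  have hright : x + y ∈ Icc (x - y) (x + y) := right_mem_Icc.2 (hz.1.trans hz.2)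
  -- If `cosLaw κ x y z = N / S`, then by the addition formulas the factors are `S - N` and `S + N`.
  have hbetween : 0 ≤ (md κ z - md κ (x - y)) * (md κ (x + y) - md κ z) := by
    rcases hmd with hmono | hanti
    · exact mul_nonneg (sub_nonneg.2 (hmono hleft hz hz.1)) (sub_nonneg.2 (hmono hz hright hz.2))
    · exact mul_nonneg_of_nonpos_of_nonpos (sub_nonpos.2 (hanti hleft hz hz.1))
        (sub_nonpos.2 (hanti hz hright hz.2))
  rw [md_sub, md_add] at hbetween
  rw [cosLaw, abs_div]
  refine div_le_one_of_le₀ (sq_le_sq.1 ?_) (abs_nonneg _)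
  linarith

lemma cosLaw_mul_sn_mul_sn (hx : sn κ x ≠ 0) (hy : sn κ y ≠ 0) :
    cosLaw κ x y z * (sn κ x * sn κ y) = md κ x - md κ z + md κ y * cs κ x := by
  rw [cosLaw, div_mul_cancel₀ _ (mul_ne_zero hx hy), cs_eq_one_sub_md]
  ring

lemma sn_mul_cosLaw_add_sn_mul_cosLaw (hx : sn κ x ≠ 0) (hy : sn κ y ≠ 0) (hz : sn κ z ≠ 0) :
    sn κ x * cosLaw κ x y z + sn κ z * cosLaw κ z y x =
      md κ y / sn κ y * (cs κ x + cs κ z) := by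
  field_simp
  linear_combination cosLaw_mul_sn_mul_sn (z := z) hx hy + cosLaw_mul_sn_mul_sn (z := x) hz hy

end CosineLaw

/-- The filter of pairs `(b, c)` tending to `(0, a)` subject to `|a - c| < b`: the regime in which
the triangle with sides `a`, `b`, `c` degenerates to a segment of length `a`. -/
def thinTriangles (a : ℝ) : Filter (ℝ × ℝ) :=
  𝓝[{p | |a - p.2| < p.1}] (0, a)

section ThinTriangles

variable {κ a : ℝ}

lemma eventually_thinTriangles_iff {P : ℝ × ℝ → Prop} :
    (∀ᶠ p in thinTriangles a, P p) ↔
      ∃ δ > 0, ∀ b c : ℝ, 0 < b → b < δ → |a - c| < b → P (b, c) := by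
  simp only [thinTriangles, eventually_nhdsWithin_iff, Metric.eventually_nhds_iff, Prod.forall,
    Prod.dist_eq, Real.dist_eq, sub_zero, max_lt_iff, mem_ofPred_eq]
  refine exists_congr fun δ => and_congr_right fun _ => forall₂_congr fun b c => ?_
  constructor
  · intro h hb hbδ hc
    exact h ⟨by rwa [abs_of_pos hb], by rw [abs_sub_comm]; exact hc.trans hbδ⟩ hc
  · intro h hδ hc
    exact h ((abs_nonneg _).trans_lt hc) ((le_abs_self b).trans_lt hδ.1) hc

lemma tendsto_fst_thinTriangles (a : ℝ) : Tendsto Prod.fst (thinTriangles a) (𝓝 0) :=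
  (continuous_fst.tendsto (0, a)).mono_left nhdsWithin_le_nhds

lemma tendsto_snd_thinTriangles (a : ℝ) : Tendsto Prod.snd (thinTriangles a) (𝓝 a) :=
  (continuous_snd.tendsto (0, a)).mono_left nhdsWithin_le_nhds

lemma isBigO_fst_sq (a : ℝ) : (fun p => p.1 ^ 2) =O[thinTriangles a] Prod.fst :=
  ((isLittleO_pow_id one_lt_two).comp_tendsto (tendsto_fst_thinTriangles a)).isBigO

lemma isBigO_snd_sub (a : ℝ) : (fun p => p.2 - a) =O[thinTriangles a] Prod.fst :=
  .of_bound 1 <| eventually_thinTriangles_iff.2 ⟨1, one_pos, fun b c hb _ hc => by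
    simpa [abs_of_pos hb, abs_sub_comm] using hc.le⟩

lemma isBigO_comp_snd_sub {f : ℝ → ℝ} {f' : ℝ} (hf : HasDerivAt f f' a) :
    (fun p => f p.2 - f a) =O[thinTriangles a] Prod.fst :=
  (hf.isBigO_sub.comp_tendsto (tendsto_snd_thinTriangles a)).trans (isBigO_snd_sub a)

lemma isBigO_comp_snd_sub_sub_mul {f f' : ℝ → ℝ} {f'' : ℝ}
    (hf : ∀ᶠ x in 𝓝 a, HasDerivAt f (f' x) x) (hf' : HasDerivAt f' f'' a) :
    (fun p => f p.2 - f a - (p.2 - a) * f' a) =O[thinTriangles a] fun p => p.1 ^ 2 :=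
  ((isBigO_sub_sub_smul_deriv hf hf').comp_tendsto (tendsto_snd_thinTriangles a)).trans
    ((isBigO_snd_sub a).pow 2)

lemma eventually_sn_fst_ne_zero (κ a : ℝ) : ∀ᶠ p in thinTriangles a, sn κ p.1 ≠ 0 := by
  have hpos : ∀ᶠ p in thinTriangles a, 0 < p.1 :=
    eventually_thinTriangles_iff.2 ⟨1, one_pos, fun _ _ hb _ _ => hb⟩
  filter_upwards [(tendsto_fst_thinTriangles a).eventually (eventually_sn_eq_zero_imp κ), hpos]
    with p himp hp h
  exact hp.ne' (himp h)

lemma eventually_sn_snd_ne_zero (hS : sn κ a ≠ 0) : ∀ᶠ p in thinTriangles a, sn κ p.2 ≠ 0 :=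
  ((hasDerivAt_sn κ a).continuousAt.tendsto.comp (tendsto_snd_thinTriangles a)).eventually_ne hS

lemma eventually_abs_cosLaw_le_one (hS : sn κ a ≠ 0) :
    ∀ᶠ p in thinTriangles a, |cosLaw κ a p.1 p.2| ≤ 1 ∧ |cosLaw κ p.2 p.1 a| ≤ 1 := by
  obtain ⟨ε, hε, hmd⟩ := exists_ball_monotoneOn_or_antitoneOn (.of_forall (hasDerivAt_md κ))
    (hasDerivAt_sn κ a).continuousAt hS
  rw [Real.ball_eq_Ioo] at hmd
  refine eventually_thinTriangles_iff.2 ⟨ε / 2, half_pos hε, fun b c hb hbε hc => ?_⟩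
  obtain ⟨hc₁, hc₂⟩ := abs_lt.1 hc
  have hsub_a : Icc (a - b) (a + b) ⊆ Ioo (a - ε) (a + ε) :=
    Icc_subset_Ioo (by linarith) (by linarith)
  have hsub_c : Icc (c - b) (c + b) ⊆ Ioo (a - ε) (a + ε) :=
    Icc_subset_Ioo (by linarith) (by linarith)
  exact ⟨abs_cosLaw_le_one (hmd.imp (·.mono hsub_a) (·.mono hsub_a)) ⟨by linarith, by linarith⟩,
    abs_cosLaw_le_one (hmd.imp (·.mono hsub_c) (·.mono hsub_c)) ⟨by linarith, by linarith⟩⟩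

lemma isBigO_cosLaw_left_one (hS : sn κ a ≠ 0) :
    (fun p => cosLaw κ a p.1 p.2) =O[thinTriangles a] fun _ => (1 : ℝ) :=
  .of_bound 1 <| (eventually_abs_cosLaw_le_one hS).mono fun _ hp => by simpa using hp.1

lemma isBigO_cosLaw_right_one (hS : sn κ a ≠ 0) :
    (fun p => cosLaw κ p.2 p.1 a) =O[thinTriangles a] fun _ => (1 : ℝ) :=
  .of_bound 1 <| (eventually_abs_cosLaw_le_one hS).mono fun _ hp => by simpa using hp.2

lemma isBigO_sub_snd_sub_fst_mul_cosLaw (hS : sn κ a ≠ 0) :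
    (fun p => a - p.2 - p.1 * cosLaw κ a p.1 p.2) =O[thinTriangles a] fun p => p.1 ^ 2 := by
  have hb := tendsto_fst_thinTriangles a
  have hmd := isBigO_comp_snd_sub_sub_mul (.of_forall (hasDerivAt_md κ)) (hasDerivAt_sn κ a)
  have hsn : (fun p => cosLaw κ a p.1 p.2 * (sn κ p.1 - p.1)) =O[thinTriangles a]
      fun p => p.1 ^ 2 := by
    simpa using (isBigO_cosLaw_left_one hS).mul ((isBigO_sn_sub_self κ).comp_tendsto hb)
  have hcs := ((isBigO_md_zero κ).comp_tendsto hb).const_mul_left (cs κ a)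
  refine (((hmd.add (hsn.const_mul_left (sn κ a))).sub hcs).const_mul_left (sn κ a)⁻¹).congr'
    ?_ .rfl
  filter_upwards [eventually_sn_fst_ne_zero κ a] with p hp
  rw [inv_mul_eq_iff_eq_mul₀ hS]
  simp only [Function.comp_apply]
  linear_combination cosLaw_mul_sn_mul_sn (z := p.2) hS hp

lemma isBigO_md_fst_div_sn_fst_sub_half (κ a : ℝ) :
    (fun p => md κ p.1 / sn κ p.1 - p.1 / 2) =O[thinTriangles a] fun p => p.1 ^ 2 :=
  (isBigO_md_div_sn_sub_half κ).comp_tendsto (tendsto_fst_thinTriangles a)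

lemma isBigO_cs_add_cs_one (κ a : ℝ) :
    (fun p => cs κ a + cs κ p.2) =O[thinTriangles a] fun _ => (1 : ℝ) :=
  (((hasDerivAt_cs κ a).continuousAt.tendsto.comp
    (tendsto_snd_thinTriangles a)).const_add (cs κ a)).isBigO_one ℝ

lemma isBigO_cosLaw_add_cosLaw (hS : sn κ a ≠ 0) :
    (fun p => cosLaw κ a p.1 p.2 + cosLaw κ p.2 p.1 a) =O[thinTriangles a] Prod.fst := by
  have hratio : (fun p => md κ p.1 / sn κ p.1) =O[thinTriangles a] Prod.fst :=
    (((isBigO_md_fst_div_sn_fst_sub_half κ a).trans (isBigO_fst_sq a)).add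
      (isBigO_const_mul_self (1 / 2) Prod.fst (thinTriangles a))).congr_left fun p => by ring
  have hsn := (isBigO_comp_snd_sub (hasDerivAt_sn κ a)).mul (isBigO_cosLaw_right_one hS)
  have hcs := hratio.mul (isBigO_cs_add_cs_one κ a)
  simp only [mul_one] at hsn hcs
  refine ((hcs.sub hsn).const_mul_left (sn κ a)⁻¹).congr' ?_ .rfl
  filter_upwards [eventually_sn_fst_ne_zero κ a, eventually_sn_snd_ne_zero hS] with p hb hc
  rw [inv_mul_eq_iff_eq_mul₀ hS, ← sn_mul_cosLaw_add_sn_mul_cosLaw hS hb hc]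
  ring

lemma isBigO_sn_mul_cosLaw_add_cosLaw_sub (hS : sn κ a ≠ 0) :
    (fun p => sn κ a * (cosLaw κ a p.1 p.2 + cosLaw κ p.2 p.1 a) -
      cs κ a * p.1 * (1 + cosLaw κ a p.1 p.2 * cosLaw κ p.2 p.1 a)) =O[thinTriangles a]
      fun p => p.1 ^ 2 := by
  have hY := isBigO_cosLaw_right_one hS
  have hratio := (isBigO_md_fst_div_sn_fst_sub_half κ a).mul (isBigO_cs_add_cs_one κ a)
  have hcs := ((isBigO_refl Prod.fst (thinTriangles a)).mul
    (isBigO_comp_snd_sub (hasDerivAt_cs κ a))).const_mul_left (1 / 2)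
  have hsn := (isBigO_comp_snd_sub_sub_mul (.of_forall (hasDerivAt_sn κ))
    (hasDerivAt_cs κ a)).mul hY
  have hside := ((isBigO_sub_snd_sub_fst_mul_cosLaw hS).mul hY).const_mul_left (cs κ a)
  simp only [mul_one, ← sq] at hratio hcs hsn hside
  refine (((hratio.add hcs).sub hsn).add hside).congr' ?_ .rfl
  filter_upwards [eventually_sn_fst_ne_zero κ a, eventually_sn_snd_ne_zero hS] with p hb hc
  linear_combination -sn_mul_cosLaw_add_sn_mul_cosLaw hS hb hc

lemma isBigO_cosLaw_add_cosLaw_sub (hS : sn κ a ≠ 0) :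
    (fun p => cosLaw κ a p.1 p.2 + cosLaw κ p.2 p.1 a -
      (1 / 2) * ((1 - cosLaw κ a p.1 p.2 ^ 2) + (1 - cosLaw κ p.2 p.1 a ^ 2)) *
        fmod a κ * p.1) =O[thinTriangles a] fun p => p.1 ^ 2 := by
  have hmain := (isBigO_sn_mul_cosLaw_add_cosLaw_sub hS).const_mul_left (sn κ a)⁻¹
  have hsum := isBigO_cosLaw_add_cosLaw hS
  have hsquare : (fun p => p.1 * (cosLaw κ a p.1 p.2 + cosLaw κ p.2 p.1 a) ^ 2)
      =O[thinTriangles a] fun p => p.1 ^ 2 := by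
    have hfst := (tendsto_fst_thinTriangles a).isBigO_one ℝ
    simpa using hfst.mul (hsum.pow 2)
  refine (hmain.add (hsquare.const_mul_left (fmod a κ / 2))).congr_left fun p => ?_
  rw [fmod]
  field_simp
  ring

lemma isBigO_cos_mAngle_add_cos_mAngle_sub (hS : sn κ a ≠ 0) :
    (fun p => Real.cos (mAngle κ a p.1 p.2) + Real.cos (mAngle κ p.2 p.1 a) -
      (1 / 2) * (Real.sin (mAngle κ a p.1 p.2) ^ 2 + Real.sin (mAngle κ p.2 p.1 a) ^ 2) *
        fmod a κ * p.1) =O[thinTriangles a] fun p => p.1 ^ 2 := by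
  refine (isBigO_cosLaw_add_cosLaw_sub hS).congr' ?_ .rfl
  filter_upwards [eventually_abs_cosLaw_le_one hS] with p ⟨hX, hY⟩
  rw [Real.sin_sq, Real.sin_sq, cos_mAngle hX, cos_mAngle hY]

end ThinTriangles

theorem stmt18_general {κ a : ℝ} (hS : sn κ a ≠ 0) :
    ∃ C > (0 : ℝ), ∃ δ > (0 : ℝ), ∀ b c : ℝ, 0 < b → b < δ → |a - c| < b →
      |Real.cos (mAngle κ a b c) + Real.cos (mAngle κ c b a) -
        (1 / 2) * ((Real.sin (mAngle κ a b c)) ^ 2 +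
          (Real.sin (mAngle κ c b a)) ^ 2) * fmod a κ * b| ≤ C * b ^ 2 := by
  obtain ⟨C, hC, hbound⟩ := (isBigO_cos_mAngle_add_cos_mAngle_sub hS).exists_pos
  obtain ⟨δ, hδ, h⟩ := eventually_thinTriangles_iff.1 hbound.bound
  refine ⟨C, hC, δ, hδ, fun b c hb hbδ hc => ?_⟩
  simpa only [Real.norm_eq_abs, abs_of_nonneg (sq_nonneg b)] using h b c hb hbδ hc

/-- Identity (1.13): for a model triangle `p q x` in `M²_κ` with `a = |pq|`,
`c = |px|`, `b = |qx|` and `|a - c| < b`, as `b → 0`: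
`cos ∠̃_q(p,x) + cos ∠̃_x(p,q)
  = ½[sin²∠̃_q(p,x) + sin²∠̃_x(p,q)]·f_a(κ)·b + O(b²)`. -/
theorem stmt18 (κ a : ℝ) (ha : 0 < a)
    (haκ : 0 < κ → a < Real.pi / (10 * Real.sqrt κ)) :
    ∃ C > (0:ℝ), ∃ δ > (0:ℝ), ∀ b c : ℝ, 0 < b → b < δ → 0 < c → |a - c| < b →
      |Real.cos (mAngle κ a b c) + Real.cos (mAngle κ c b a) -
        (1 / 2) * ((Real.sin (mAngle κ a b c)) ^ 2 +
          (Real.sin (mAngle κ c b a)) ^ 2) * fmod a κ * b| ≤ C * b ^ 2 := by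
  have hS : 0 < sn κ a := sn_pos ha fun hκ => (haκ hκ).trans_le <|
    div_le_div_of_nonneg_left Real.pi_pos.le (Real.sqrt_pos.2 hκ) (by linarith [Real.sqrt_nonneg κ])
  obtain ⟨C, hC, δ, hδ, h⟩ := stmt18_general hS.ne'
  exact ⟨C, hC, δ, hδ, fun b c hb hbδ _ hac => h b c hb hbδ hac⟩
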